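/- arXiv:2406.14687 — 3 statements merged into one kernel-verified Lean document; each statement's English description precedes it below -/
import Mathlib

section
/- Let s be an n×m complex matrix with sᴴ * s = 1ₘ (where sᴴ denotes the conjugate transpose), and let g be an m×m unitary matrix. Then the n×n matrix 1ₙ + s * (g − 1ₘ) * sᴴ is unitary. -/
open Matrix

/-!
If `t * s = 1`, then `g ↦ 1 + s * (g - 1) * t` extends `g` from the range of `s` by the identity on
the complement `ker t`, so it is multiplicative. For an orthonormal frame `s` and `t = sᴴ` it also
commutes with `ᴴ`; being a homomorphism of star monoids, it maps unitaries to unitaries.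
-/

section

variable {m n R : Type*} [Fintype m] [DecidableEq m] [DecidableEq n] [Ring R]

theorem one_add_mul_sub_one_mul_mul_one_add [Fintype n] {s : Matrix n m R} {t : Matrix m n R}
    (hts : t * s = 1) (g h : Matrix m m R) :
    (1 + s * (g - 1) * t) * (1 + s * (h - 1) * t) = 1 + s * (g * h - 1) * t := by
  have cancel_middle : s * (g - 1) * t * (s * (h - 1) * t) = s * ((g - 1) * (h - 1)) * t := by
    calc s * (g - 1) * t * (s * (h - 1) * t)
        = s * (g - 1) * (t * s) * (h - 1) * t := by simp only [Matrix.mul_assoc]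
      _ = s * ((g - 1) * (h - 1)) * t := by rw [hts, Matrix.mul_one, Matrix.mul_assoc s]
  have mul_sub_one_eq : g * h - 1 = (g - 1) + (h - 1) + (g - 1) * (h - 1) := by noncomm_ring
  calc (1 + s * (g - 1) * t) * (1 + s * (h - 1) * t)
      = 1 + (s * (g - 1) * t + s * (h - 1) * t + s * (g - 1) * t * (s * (h - 1) * t)) := by
        noncomm_ring
    _ = 1 + s * (g * h - 1) * t := by
        rw [cancel_middle, mul_sub_one_eq]
        simp only [Matrix.mul_add, Matrix.add_mul]

theorem conjTranspose_one_add_mul_sub_one_mul_conjTranspose [StarRing R]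
    (s : Matrix n m R) (g : Matrix m m R) :
    (1 + s * (g - 1) * sᴴ)ᴴ = 1 + s * (gᴴ - 1) * sᴴ := by
  simp [Matrix.mul_assoc]

/-- Miller's map for a fixed orthonormal frame `s`: the star monoid homomorphism extending an
endomorphism of the span of `s`, given by its matrix in the frame, by the identity on the orthogonal
complement. It is defined on all matrices, not just on unitary ones. -/
def frameExtension [Fintype n] [StarRing R] (s : Matrix n m R) (hs : sᴴ * s = 1) :
    Matrix m m R →⋆* Matrix n n R where
  toFun g := 1 + s * (g - 1) * sᴴ
  map_one' := by simp
  map_mul' g h := (one_add_mul_sub_one_mul_mul_one_add hs g h).symm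
  map_star' g := (conjTranspose_one_add_mul_sub_one_mul_conjTranspose s g).symm

theorem stmt_4_general [Fintype n] [StarRing R] (s : Matrix n m R) (hs : sᴴ * s = 1)
    (g : Matrix m m R) (hg : g ∈ unitary (Matrix m m R)) :
    1 + s * (g - 1) * sᴴ ∈ unitary (Matrix n n R) :=
  Unitary.map_mem (frameExtension s hs) hg

end

/-- If `s` is an `n × m` complex matrix with `sᴴ * s = 1ₘ` and `g` is an `m × m` unitary
matrix, then `1 + s * (g - 1) * sᴴ` is an `n × n` unitary matrix. -/
theorem stmt_4 {m n : ℕ} (s : Matrix (Fin n) (Fin m) ℂ) (hs : sᴴ * s = 1)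
    (g : Matrix (Fin m) (Fin m) ℂ) (hg : g ∈ Matrix.unitaryGroup (Fin m) ℂ) :
    (1 + s * (g - 1) * sᴴ) ∈ Matrix.unitaryGroup (Fin n) ℂ :=
  stmt_4_general s hs g hg
end

section
/- Let E be an n-dimensional complex inner product space, let A be a unitary operator on E, and let m ≤ n. Then the dimension of ker(A − id) is at least n − m if and only if there exists a subspace V of E with dim V = m such that A maps V onto V and A x = x for every x in the orthogonal complement Vᗮ. -/
/-!
For `V` in `E`, an isometry fixing `Vᗮ` pointwise maps `Vᗮ` onto itself, hence also `V = Vᗮᗮ`. So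
invariance of `V` is automatic, and the question is whether the fixed space contains `Vᗮ` for some
`V` of dimension `m`, that is, whether it contains a subspace of dimension `n - m`.
-/

open Module

section Finrank

variable {R M : Type*} [Semiring R] [StrongRankCondition R] [AddCommMonoid M] [Module R M]

theorem exists_submodule_le_finrank_eq {K : Submodule R M} {d : ℕ} (hd : d ≤ finrank R K) :
    ∃ W ≤ K, finrank R W = d := by
  have := nontrivial_of_invariantBasisNumber R
  obtain ⟨b, hb⟩ := exists_linearIndependent_of_le_finrank hd
  have hb' : LinearIndependent R fun i => (b i : M) :=
    hb.map_injOn K.subtype K.subtype_injective.injOn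
  refine ⟨Submodule.span R (Set.range fun i => (b i : M)), ?_, ?_⟩
  · exact Submodule.span_le.2 (Set.range_subset_iff.2 fun i => (b i).2)
  · rw [finrank_span_eq_card hb', Fintype.card_fin]

end Finrank

section InnerProduct

variable {𝕜 E : Type*} [RCLike 𝕜] [NormedAddCommGroup E] [InnerProductSpace 𝕜 E]

theorem finrank_sub_le_finrank_iff_exists_orthogonal_le [FiniteDimensional 𝕜 E] {m : ℕ}
    (hm : m ≤ finrank 𝕜 E) (K : Submodule 𝕜 E) :
    finrank 𝕜 E - m ≤ finrank 𝕜 K ↔ ∃ V : Submodule 𝕜 E, finrank 𝕜 V = m ∧ Vᗮ ≤ K := by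
  constructor
  · intro h
    obtain ⟨W, hWK, hW⟩ := exists_submodule_le_finrank_eq h
    have hadd := W.finrank_add_finrank_orthogonal
    exact ⟨Wᗮ, by lia, by rwa [W.orthogonal_orthogonal]⟩
  · rintro ⟨V, rfl, hVK⟩
    have hadd := V.finrank_add_finrank_orthogonal
    have hle := Submodule.finrank_mono hVK
    lia

theorem map_eq_self_of_orthogonal_le_fixedSubmodule (A : E ≃ₗᵢ[𝕜] E) {V : Submodule 𝕜 E}
    [V.HasOrthogonalProjection]
    (h : Vᗮ ≤ LinearMap.fixedSubmodule (A.toLinearEquiv : E →ₗ[𝕜] E)) :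
    V.map (A.toLinearEquiv : E →ₗ[𝕜] E) = V := by
  have hmap : Vᗮ.map (A.toLinearEquiv : E →ₗ[𝕜] E) = Vᗮ :=
    Submodule.mem_stabilizer_submodule_iff_map_eq.1
      (LinearEquiv.mem_stabilizer_submodule_of_le_fixedSubmodule h)
  calc V.map (A.toLinearEquiv : E →ₗ[𝕜] E)
      = Vᗮᗮ.map (A.toLinearEquiv : E →ₗ[𝕜] E) := by rw [V.orthogonal_orthogonal]
    _ = (Vᗮ.map (A.toLinearEquiv : E →ₗ[𝕜] E))ᗮ := Vᗮ.map_orthogonal_equiv A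
    _ = V := by rw [hmap, V.orthogonal_orthogonal]

theorem stmt_6_general [FiniteDimensional 𝕜 E] {n m : ℕ} (hn : finrank 𝕜 E = n) (hmn : m ≤ n)
    (A : E ≃ₗᵢ[𝕜] E) :
    n - m ≤ finrank 𝕜 (LinearMap.ker ((A.toLinearEquiv : E →ₗ[𝕜] E) - LinearMap.id)) ↔
      ∃ V : Submodule 𝕜 E, finrank 𝕜 V = m ∧
        V.map (A.toLinearEquiv : E →ₗ[𝕜] E) = V ∧ ∀ x ∈ Vᗮ, A x = x := by
  subst hn
  rw [← LinearMap.fixedSubmodule_eq_ker, finrank_sub_le_finrank_iff_exists_orthogonal_le hmn]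
  refine exists_congr fun V => and_congr_right fun _ => ?_
  have hfix : Vᗮ ≤ LinearMap.fixedSubmodule (A.toLinearEquiv : E →ₗ[𝕜] E) ↔
      ∀ x ∈ Vᗮ, A x = x := by
    simp [SetLike.le_def]
  rw [← hfix]
  exact ⟨fun h => ⟨map_eq_self_of_orthogonal_le_fixedSubmodule A h, h⟩, And.right⟩

end InnerProduct

/-- For a unitary operator `A` on an `n`-dimensional complex inner product space `E` and
`m ≤ n`: `dim ker (A - id) ≥ n - m` iff there is an `m`-dimensional subspace `V` of `E`
with `A(V) = V` and `A x = x` for all `x ∈ Vᗮ`. -/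
theorem stmt_6 {E : Type*} [NormedAddCommGroup E] [InnerProductSpace ℂ E]
    [FiniteDimensional ℂ E] {n m : ℕ} (hn : Module.finrank ℂ E = n) (hmn : m ≤ n)
    (A : E ≃ₗᵢ[ℂ] E) :
    n - m ≤ Module.finrank ℂ
        (LinearMap.ker ((A.toLinearEquiv : E →ₗ[ℂ] E) - LinearMap.id)) ↔
      ∃ V : Submodule ℂ E, Module.finrank ℂ V = m ∧
        Submodule.map (A.toLinearEquiv : E →ₗ[ℂ] E) V = V ∧
        ∀ x ∈ Vᗮ, A x = x :=
  stmt_6_general hn hmn A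
end

section
/- Let R be a commutative ring, n ≥ 2, let i ≠ j be indices in Fin n, let c ∈ R, and let g be an invertible n×n matrix over R. Let E denote the matrix with entry c in position (i,j) and 0 elsewhere, so that the transvection T = 1ₙ + E is invertible with inverse 1ₙ − E. Then there exists an n×n matrix P with entries in the polynomial ring R[t] such that: entrywise evaluation of P at t = 0 equals g; entrywise evaluation at t = 1 equals T * g * T⁻¹; and for every t ∈ R, the entrywise evaluation of P at t equals (1ₙ + t•E) * g * (1ₙ − t•E) and is an invertible matrix (with (1ₙ + t•E)⁻¹ = 1ₙ − t•E). -/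
/-!
For `i ≠ j` the matrix `E = single i j c` squares to zero, hence so does `X • E` over `R[X]`, and
`1 + X • E` is invertible with inverse `1 - X • E`. Conjugating `g` by it gives a point of
`GL_n(R[X])`, that is, a naïve `𝔸¹`-homotopy; specializing `X` to `0` and `1` gives its ends.
-/

section SquareZero

variable {A : Type*} [Ring A] {a : A}

theorem one_add_mul_one_sub_of_mul_self_eq_zero (ha : a * a = 0) : (1 + a) * (1 - a) = 1 := by
  rw [← (Commute.one_left a).mul_self_sub_mul_self_eq, ha, one_mul, sub_zero]

theorem one_sub_mul_one_add_of_mul_self_eq_zero (ha : a * a = 0) : (1 - a) * (1 + a) = 1 := by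
  rw [← (Commute.one_left a).mul_self_sub_mul_self_eq', ha, one_mul, sub_zero]

theorem smul_mul_smul_self_eq_zero {S : Type*} [CommSemiring S] [Algebra S A] (t : S)
    (ha : a * a = 0) : (t • a) * (t • a) = 0 := by
  rw [smul_mul_smul_comm, ha, smul_zero]

theorem isUnit_one_add_mul_mul_one_sub {g : A} (ha : a * a = 0) (hg : IsUnit g) :
    IsUnit ((1 + a) * g * (1 - a)) :=
  have ha_nil : IsNilpotent a := ⟨2, (sq a).trans ha⟩
  (ha_nil.isUnit_one_add.mul hg).mul ha_nil.isUnit_one_sub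

end SquareZero

section ConjHomotopy

open Polynomial

variable {R ι : Type*} [CommRing R] [Fintype ι] [DecidableEq ι]

/-- The matrix `(1 + X • E) * g * (1 - X • E)` over `R[X]`. When `E * E = 0` it is the naïve
`𝔸¹`-homotopy from `g` to its conjugate by `1 + E`; writing `1 - X • E` for the inverse of
`1 + X • E` makes it meaningful for every `E`. -/
noncomputable def conjHomotopy (E g : Matrix ι ι R) : Matrix ι ι R[X] :=
  (1 + (X : R[X]) • E.map C) * g.map C * (1 - (X : R[X]) • E.map C)

theorem map_eval_conjHomotopy (E g : Matrix ι ι R) (t : R) :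
    (conjHomotopy E g).map (eval t) = (1 + t • E) * g * (1 - t • E) := by
  have eval_const (M : Matrix ι ι R) : (evalRingHom t).mapMatrix (M.map C) = M := by
    ext; simp
  have eval_X_smul : (evalRingHom t).mapMatrix ((X : R[X]) • E.map C) = t • E := by
    ext; simp [mul_comm t]
  change (evalRingHom t).mapMatrix (conjHomotopy E g) = _
  simp only [conjHomotopy, map_mul, map_add, map_sub, map_one, eval_const, eval_X_smul]

theorem map_eval_zero_conjHomotopy (E g : Matrix ι ι R) :
    (conjHomotopy E g).map (eval 0) = g := by
  simp [map_eval_conjHomotopy]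

theorem map_eval_one_conjHomotopy (E g : Matrix ι ι R) :
    (conjHomotopy E g).map (eval 1) = (1 + E) * g * (1 - E) := by
  simp [map_eval_conjHomotopy]

theorem isUnit_conjHomotopy {E g : Matrix ι ι R} (hE : E * E = 0) (hg : IsUnit g) :
    IsUnit (conjHomotopy E g) := by
  have hE_const : E.map C * E.map C = 0 := by
    rw [← Matrix.map_mul, hE, Matrix.map_zero _ C_0]
  exact isUnit_one_add_mul_mul_one_sub (smul_mul_smul_self_eq_zero X hE_const)
    (hg.map C.mapMatrix)

theorem stmt_13_general {E g : Matrix ι ι R} (hE : E * E = 0) (hg : IsUnit g) :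
    (1 + E) * (1 - E) = 1 ∧
    (1 - E) * (1 + E) = 1 ∧
    ∃ P : Matrix ι ι R[X],
      IsUnit P ∧
      P.map (eval 0) = g ∧
      P.map (eval 1) = (1 + E) * g * (1 - E) ∧
      ∀ t : R,
        P.map (eval t) = (1 + t • E) * g * (1 - t • E) ∧
        IsUnit (P.map (eval t)) ∧
        (1 + t • E) * (1 - t • E) = 1 := by
  have hP : IsUnit (conjHomotopy E g) := isUnit_conjHomotopy hE hg
  refine ⟨one_add_mul_one_sub_of_mul_self_eq_zero hE, one_sub_mul_one_add_of_mul_self_eq_zero hE,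
    conjHomotopy E g, hP, map_eval_zero_conjHomotopy E g, map_eval_one_conjHomotopy E g,
    fun t => ⟨map_eval_conjHomotopy E g t, hP.map (evalRingHom t).mapMatrix, ?_⟩⟩
  exact one_add_mul_one_sub_of_mul_self_eq_zero (smul_mul_smul_self_eq_zero t hE)

end ConjHomotopy

/-- Conjugation of an invertible matrix `g` by the transvection `T = 1 + E`, where
`E = stdBasisMatrix i j c` with `i ≠ j`, is naïvely `𝔸¹`-homotopic to the identity:
there is a matrix `P` of polynomials whose evaluation at `0` is `g`, at `1` is
`T * g * T⁻¹`, and at any `t` is the invertible matrix `(1 + t • E) * g * (1 - t • E)`. -/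
theorem stmt_13 {R : Type*} [CommRing R] {n : ℕ} (hn : 2 ≤ n)
    (i j : Fin n) (hij : i ≠ j) (c : R)
    (g : Matrix (Fin n) (Fin n) R) (hg : IsUnit g) :
    (1 + Matrix.single i j c) * (1 - Matrix.single i j c) = 1 ∧
    (1 - Matrix.single i j c) * (1 + Matrix.single i j c) = 1 ∧
    ∃ P : Matrix (Fin n) (Fin n) (Polynomial R),
      P.map (Polynomial.eval 0) = g ∧
      P.map (Polynomial.eval 1) =
        (1 + Matrix.single i j c) * g * (1 - Matrix.single i j c) ∧
      ∀ t : R,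
        P.map (Polynomial.eval t) =
          (1 + t • Matrix.single i j c) * g * (1 - t • Matrix.single i j c) ∧
        IsUnit (P.map (Polynomial.eval t)) ∧
        (1 + t • Matrix.single i j c) * (1 - t • Matrix.single i j c) = 1 := by
  obtain ⟨h, h', P, -, hP⟩ :=
    stmt_13_general (Matrix.single_mul_single_of_ne c i j i hij.symm c) hg
  exact ⟨h, h', P, hP⟩
end
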